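/- The spaces ARI_{al/al} (underlined) and ARI_{al*al} (underlined) are Lie subalgebras of ARI under the ari-bracket; moreover the ari-bracket of two elements of ARI_{al*al} lies in ARI_{al/al}. -/

import Mathlib

open List

variable {K : Type*} [Field K] [CharZero K]

/-- The multiset (as a list, with multiplicity) of shuffles of two words. -/
def shuffles {α : Type*} : List α → List α → List (List α)
  | [], v => [v]
  | u, [] => [u]
  | x :: u, y :: v =>
      ((shuffles u (y :: v)).map (x :: ·)) ++ ((shuffles (x :: u) v).map (y :: ·))
  termination_by u v => u.length + v.length

/-- A mould (at the level of evaluations) is alternal if all its shuffle sums over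
pairs of nonempty words vanish. -/
def Alternal (A : List K → K) : Prop :=
  ∀ u v : List K, u ≠ [] → v ≠ [] → ((shuffles u v).map A).sum = 0

/-- mould multiplication `mu`. -/
def mu (A B : List K → K) : List K → K :=
  fun w => ∑ k ∈ Finset.range (w.length + 1), A (w.take k) * B (w.drop k)

/-- `lu(A,B) = mu(A,B) - mu(B,A)`. -/
def lu (A B : List K → K) : List K → K :=
  fun w => mu A B w - mu B A w

/-- All decompositions of a word into two consecutive subwords. -/
def splits2 {α : Type*} (w : List α) : List (List α × List α) :=
  (List.range (w.length + 1)).map fun k => (w.take k, w.drop k)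

/-- All decompositions of a word into three consecutive subwords. -/
def splits3 {α : Type*} (w : List α) : List (List α × List α × List α) :=
  (splits2 w).flatMap fun p => (splits2 p.2).map fun q => (p.1, q.1, q.2)

/-- Add `s` to the first letter of a word. -/
def addFirst (s : K) : List K → List K
  | [] => []
  | x :: xs => (x + s) :: xs

/-- Add `s` to the last letter of a word. -/
def addLast (s : K) : List K → List K
  | [] => []
  | [x] => [x + s]
  | x :: xs => x :: addLast s xs

/-- `amit` for u-moulds: `(amit(B)·A)(w) = Σ_{w=abc, b,c≠∅} A(a⌈c) B(b)`. -/
def amitU (B A : List K → K) : List K → K := fun w =>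
  ((splits3 w).map fun p =>
    match p with
    | (_, [], _) => 0
    | (_, _, []) => 0
    | (a, b, c) => A (a ++ addFirst b.sum c) * B b).sum

/-- `anit` for u-moulds: `(anit(B)·A)(w) = Σ_{w=abc, a,b≠∅} A(a⌉c) B(b)`. -/
def anitU (B A : List K → K) : List K → K := fun w =>
  ((splits3 w).map fun p =>
    match p with
    | ([], _, _) => 0
    | (_, [], _) => 0
    | (a, b, c) => A (addLast b.sum a ++ c) * B b).sum

/-- `arit(B)·A = amit(B)·A - anit(B)·A` on u-moulds. -/
def aritU (B A : List K → K) : List K → K :=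
  fun w => amitU B A w - anitU B A w

/-- the ari bracket on u-moulds. -/
def ariU (A B : List K → K) : List K → K :=
  fun w => aritU B A w + lu A B w - aritU A B w

/-- `amit` for v-moulds. -/
def amitV (B A : List K → K) : List K → K := fun w =>
  ((splits3 w).map fun p =>
    match p with
    | (_, [], _) => 0
    | (_, _, []) => 0
    | (a, b, c0 :: c') => A (a ++ c0 :: c') * B (b.map (fun x => x - c0))).sum

/-- `anit` for v-moulds. -/
def anitV (B A : List K → K) : List K → K := fun w =>
  ((splits3 w).map fun p =>
    match p with
    | ([], _, _) => 0
    | (_, [], _) => 0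
    | (a, b, c) => A (a ++ c) * B (b.map (fun x => x - a.getLastD 0))).sum

/-- `arit(B)·A = amit(B)·A - anit(B)·A` on v-moulds. -/
def aritV (B A : List K → K) : List K → K :=
  fun w => amitV B A w - anitV B A w

/-- the ari bracket on v-moulds. -/
def ariV (A B : List K → K) : List K → K :=
  fun w => aritV B A w + lu A B w - aritV A B w

/-- `neg(A)(u_1,...,u_r) = A(-u_1,...,-u_r)`. -/
def negM (A : List K → K) : List K → K := fun w => A (w.map fun x => -x)

/-- `push(A)(u_1,...,u_r) = A(-u_1-⋯-u_r, u_1, ..., u_{r-1})`. -/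
def pushM (A : List K → K) : List K → K := fun w =>
  match w with
  | [] => A []
  | _ :: _ => A ((-w.sum) :: w.dropLast)

/-- `mantar(A)(u_1,...,u_r) = (-1)^{r-1} A(u_r,...,u_1)`. -/
def mantarM (A : List K → K) : List K → K :=
  fun w => (-1 : K) ^ (w.length + 1) * A w.reverse

/-- argument list for swap from u-moulds to v-moulds:
`(v_1,...,v_r) ↦ (v_r, v_{r-1}-v_r, ..., v_1-v_2)`. -/
def swapUargs (w : List K) : List K :=
  List.zipWith (· - ·) w.reverse (0 :: w.reverse)

/-- argument list for swap from v-moulds to u-moulds: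
`(u_1,...,u_r) ↦ (u_1+⋯+u_r, u_1+⋯+u_{r-1}, ..., u_1)`. -/
def swapVargs (w : List K) : List K :=
  (List.range w.length).map fun i => (w.take (w.length - i)).sum

/-- swap, sending a u-mould to a v-mould. -/
def swapUV (A : List K → K) : List K → K := fun w => A (swapUargs w)

/-- swap, sending a v-mould to a u-mould. -/
def swapVU (A : List K → K) : List K → K := fun w => A (swapVargs w)

/-- A constant-valued mould: its value depends only on the depth. -/
def IsConstantMould (C : List K → K) : Prop :=
  ∀ w w' : List K, w.length = w'.length → C w = C w'


/-- membership in ARI_{al/al} (underlined): alternal, alternal swap, even in depth 1. -/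
def InALAL (A : List K → K) : Prop :=
  A [] = 0 ∧ Alternal A ∧ Alternal (swapUV A) ∧ (∀ x : K, A [-x] = A [x])

/-- membership in ARI_{al*al} (underlined): alternal, swap alternal up to a
constant-valued mould, even in depth 1. -/
def InALstarAL (A : List K → K) : Prop :=
  A [] = 0 ∧ Alternal A ∧
    (∃ C : List K → K, IsConstantMould C ∧ Alternal (fun w => swapUV A w + C w)) ∧
    (∀ x : K, A [-x] = A [x])

/-!
Let `A` be an element of `ARI_{al*al}` and `C` a constant-valued mould making `swap A + C` alternal.

The bracket preserves alternality: in a shuffle of two words, the only terms of `amit(B)·A` and of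
`anit(B)·A` that do not cancel are those in which the acting block and the letter it acts on come
from different words, and these terms are the same for `amit` and `anit`.

Alternal moulds are mantar-invariant. Applying this to `A` and to `swap A + C` shows that
`A = neg push A + (1 - (-1)^(r+1)) C` in depth `r`. As `neg push` has finite order on each depth,
iterating kills the constant, so `A = neg push A`. Then `A - neg A` is alternal and changes sign
under the push, which forces it to vanish in depth at least `2`; in depth `1` it vanishes by
evenness. Hence `A` is push-invariant.

On push-invariant moulds the swap intertwines the two brackets, and constant-valued moulds are
central, so `swap (ari(A, B)) = ari(swap A + C, swap B + E)`, with `E` playing the role of `C` for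
`B`, is a bracket of alternal moulds.
-/

/-! ### Sums over decompositions and shuffles of words -/

section WordSums

variable {α β M : Type*} [AddCommMonoid M]

/-- The sum of `F a b` over the decompositions `w = a ++ b`. -/
def splitSum : List α → (List α → List α → M) → M
  | [], F => F [] []
  | x :: w, F => F [] (x :: w) + splitSum w fun a b => F (x :: a) b

/-- The sum of `F a z b` over the decompositions `w = a ++ z :: b`, that is, over the ways of
marking a letter of `w`. -/
def markSum : List α → (List α → α → List α → M) → M
  | [], _ => 0
  | x :: w, F => F [] x w + markSum w fun a z b => F (x :: a) z b

/-- The sum of `F` over the shuffles of `u` and `v`, counted with multiplicity. -/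
def shuffleSum (u v : List α) (F : List α → M) : M :=
  ((shuffles u v).map F).sum

theorem splitSum_nil (F : List α → List α → M) : splitSum [] F = F [] [] := rfl

theorem splitSum_cons (x : α) (w : List α) (F : List α → List α → M) :
    splitSum (x :: w) F = F [] (x :: w) + splitSum w fun a b => F (x :: a) b := rfl

theorem splits2_cons (x : α) (w : List α) :
    splits2 (x :: w) = ([], x :: w) :: (splits2 w).map fun p => (x :: p.1, p.2) := by
  simp [splits2, List.range_succ_eq_map (n := w.length + 1), Function.comp_def]

theorem sum_map_splits2 (w : List α) (F : List α × List α → M) :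
    ((splits2 w).map F).sum = splitSum w fun a b => F (a, b) := by
  induction w generalizing F with
  | nil => simp [splits2, splitSum]
  | cons x w ih =>
    rw [splits2_cons, List.map_cons, List.sum_cons, List.map_map, splitSum_cons]
    exact congrArg _ (ih fun p => F (x :: p.1, p.2))

theorem splitSum_zero (w : List α) : splitSum w (fun _ _ => (0 : M)) = 0 := by
  induction w with
  | nil => rfl
  | cons x w ih => rw [splitSum_cons, ih, add_zero]

theorem splitSum_add (w : List α) (F G : List α → List α → M) :
    (splitSum w fun a b => F a b + G a b) = splitSum w F + splitSum w G := by
  induction w generalizing F G with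
  | nil => rfl
  | cons x w ih => simp only [splitSum_cons, ih]; abel

theorem splitSum_comm (w : List α) (w' : List β) (F : List α → List α → List β → List β → M) :
    (splitSum w fun a b => splitSum w' fun c d => F a b c d) =
      splitSum w' fun c d => splitSum w fun a b => F a b c d := by
  induction w generalizing F with
  | nil => rfl
  | cons x w ih => simp only [splitSum_cons, ih, splitSum_add]

theorem splitSum_congr {w : List α} {F G : List α → List α → M}
    (h : ∀ a b, a ++ b = w → F a b = G a b) : splitSum w F = splitSum w G := by
  induction w generalizing F G with
  | nil => exact h [] [] rfl
  | cons x w ih =>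
    rw [splitSum_cons, splitSum_cons, h [] _ rfl, ih fun a b hw => h (x :: a) b (by simp [hw])]

theorem splitSum_eq_of_left_ne_nil {w : List α} {F : List α → List α → M}
    (h : ∀ a b, a ≠ [] → F a b = 0) : splitSum w F = F [] w := by
  cases w with
  | nil => rfl
  | cons x w => simp [splitSum_cons, h, splitSum_zero]

theorem splitSum_eq_of_right_ne_nil {w : List α} {F : List α → List α → M}
    (h : ∀ a b, b ≠ [] → F a b = 0) : splitSum w F = F w [] := by
  induction w generalizing F with
  | nil => rfl
  | cons x w ih =>
    rw [splitSum_cons, h _ _ (List.cons_ne_nil x w), zero_add, ih fun a b => h (x :: a) b]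

theorem splitSum_assoc (w : List α) (F : List α → List α → List α → M) :
    (splitSum w fun a r => splitSum r fun b c => F a b c) =
      splitSum w fun r c => splitSum r fun a b => F a b c := by
  induction w generalizing F with
  | nil => rfl
  | cons x w ih =>
    simp only [splitSum_cons, splitSum_nil, splitSum_add, ih fun a b c => F (x :: a) b c]
    abel

theorem sum_map_splits3 (w : List α) (F : List α × List α × List α → M) :
    ((splits3 w).map F).sum = splitSum w fun a r => splitSum r fun b c => F (a, b, c) := by
  rw [splits3, List.map_flatMap, List.flatMap, List.sum_flatten, List.map_map, sum_map_splits2]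
  simp [Function.comp_def, sum_map_splits2]

theorem splitSum_concat (w : List α) (x : α) (F : List α → List α → M) :
    splitSum (w ++ [x]) F = (splitSum w fun a b => F a (b ++ [x])) + F (w ++ [x]) [] := by
  induction w generalizing F with
  | nil => rfl
  | cons y w ih => simp only [List.cons_append, splitSum_cons, ih, add_assoc]

theorem splitSum_reverse (w : List α) (F : List α → List α → M) :
    splitSum w.reverse F = splitSum w fun a b => F b.reverse a.reverse := by
  induction w generalizing F with
  | nil => rfl
  | cons x w ih =>
    simp only [List.reverse_cons, splitSum_concat, splitSum_cons, ih, List.reverse_nil]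
    abel

theorem getLastD_append (p : α) (a b : List α) :
    (a ++ b).getLastD p = b.getLastD (a.getLastD p) := by
  induction a generalizing p with
  | nil => rfl
  | cons z a ih => rw [List.cons_append, List.getLastD_cons, List.getLastD_cons, ih]

theorem markSum_nil (F : List α → α → List α → M) : markSum [] F = 0 := rfl

theorem markSum_cons (x : α) (w : List α) (F : List α → α → List α → M) :
    markSum (x :: w) F = F [] x w + markSum w fun a z b => F (x :: a) z b := rfl

theorem markSum_add (w : List α) (F G : List α → α → List α → M) :
    (markSum w fun a z b => F a z b + G a z b) = markSum w F + markSum w G := by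
  induction w generalizing F G with
  | nil => simp [markSum_nil]
  | cons x w ih => simp only [markSum_cons, ih]; abel

theorem splitSum_eq_nil_add_markSum (w : List α) (F : List α → List α → M) :
    splitSum w F = F [] w + markSum w fun a z b => F (a ++ [z]) b := by
  induction w generalizing F with
  | nil => simp [splitSum_nil, markSum_nil]
  | cons x w ih => simp only [splitSum_cons, markSum_cons, ih, List.nil_append, List.cons_append]

theorem splitSum_eq_markSum_add_nil (w : List α) (F : List α → List α → M) :
    splitSum w F = (markSum w fun a z b => F a (z :: b)) + F w [] := by
  induction w generalizing F with
  | nil => simp [splitSum_nil, markSum_nil]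
  | cons x w ih => simp only [splitSum_cons, markSum_cons, ih, add_assoc]

theorem markSum_concat (w : List α) (x : α) (F : List α → α → List α → M) :
    markSum (w ++ [x]) F = (markSum w fun a z b => F a z (b ++ [x])) + F w x [] := by
  induction w generalizing F with
  | nil => simp [markSum_nil, markSum_cons]
  | cons y w ih => simp only [List.cons_append, markSum_cons, ih, add_assoc]

theorem markSum_reverse (w : List α) (F : List α → α → List α → M) :
    markSum w.reverse F = markSum w fun a z b => F b.reverse z a.reverse := by
  induction w generalizing F with
  | nil => rfl
  | cons x w ih =>
    simp only [List.reverse_cons, markSum_concat, markSum_cons, ih, List.reverse_nil]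
    abel

theorem shuffleSum_nil_left (v : List α) (F : List α → M) : shuffleSum [] v F = F v := by
  simp [shuffleSum, shuffles]

theorem shuffleSum_nil_right (u : List α) (F : List α → M) : shuffleSum u [] F = F u := by
  cases u <;> simp [shuffleSum, shuffles]

theorem shuffleSum_cons (x y : α) (u v : List α) (F : List α → M) :
    shuffleSum (x :: u) (y :: v) F =
      (shuffleSum u (y :: v) fun w => F (x :: w)) + shuffleSum (x :: u) v fun w => F (y :: w) := by
  simp [shuffleSum, shuffles, Function.comp_def]

theorem shuffleSum_add (u v : List α) (F G : List α → M) :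
    (shuffleSum u v fun w => F w + G w) = shuffleSum u v F + shuffleSum u v G :=
  List.sum_map_add

theorem shuffleSum_zero (u v : List α) : shuffleSum u v (fun _ => (0 : M)) = 0 :=
  List.sum_map_zero

theorem shuffleSum_comm (u v : List α) (F : List α → M) :
    shuffleSum u v F = shuffleSum v u F := by
  induction u generalizing v F with
  | nil => rw [shuffleSum_nil_left, shuffleSum_nil_right]
  | cons x u ihu =>
    induction v generalizing F with
    | nil => rw [shuffleSum_nil_left, shuffleSum_nil_right]
    | cons y v ihv => rw [shuffleSum_cons, shuffleSum_cons, ihu, ihv, add_comm]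

theorem shuffleSum_shuffleSum_comm (u v : List α) (u' v' : List β) (F : List α → List β → M) :
    (shuffleSum u v fun a => shuffleSum u' v' fun b => F a b) =
      shuffleSum u' v' fun b => shuffleSum u v fun a => F a b := by
  simpa [shuffleSum] using Multiset.sum_map_sum_map (f := F) (shuffles u v) (shuffles u' v')

theorem shuffleSum_splitSum_comm (u v : List α) (w : List β)
    (F : List α → List β → List β → M) :
    (shuffleSum u v fun s => splitSum w fun a b => F s a b) =
      splitSum w fun a b => shuffleSum u v fun s => F s a b := by
  induction w generalizing F with
  | nil => rfl
  | cons x w ih => simp only [splitSum_cons, shuffleSum_add, ih]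

theorem perm_append_of_mem_shuffles {u v w : List α} (hw : w ∈ shuffles u v) :
    w.Perm (u ++ v) := by
  induction u generalizing v w with
  | nil => simp_all [shuffles]
  | cons x u ihu =>
    induction v generalizing w with
    | nil => simp_all [shuffles]
    | cons y v ihv =>
      simp only [shuffles, List.mem_append, List.mem_map] at hw
      rcases hw with ⟨t, ht, rfl⟩ | ⟨t, ht, rfl⟩
      · exact (ihu ht).cons x
      · exact ((ihv ht).cons y).trans (List.perm_middle (l₁ := x :: u)).symm

theorem shuffleSum_congr {u v : List α} {F G : List α → M}
    (h : ∀ w, w.Perm (u ++ v) → F w = G w) : shuffleSum u v F = shuffleSum u v G :=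
  congrArg List.sum <| List.map_congr_left fun w hw => h w (perm_append_of_mem_shuffles hw)

theorem shuffleSum_map (f : α → β) (u v : List α) (F : List β → M) :
    (shuffleSum u v fun w => F (w.map f)) = shuffleSum (u.map f) (v.map f) F := by
  induction u generalizing v F with
  | nil => simp only [List.map_nil, shuffleSum_nil_left]
  | cons x u ihu =>
    induction v generalizing F with
    | nil => simp only [List.map_nil, shuffleSum_nil_right]
    | cons y v ihv =>
      simp only [List.map_cons, shuffleSum_cons] at ihu ihv ⊢
      rw [ihu (y :: v) fun w => F (f x :: w), ihv fun w => F (f y :: w), List.map_cons]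

theorem shuffleSum_singleton_concat (x y : α) (v : List α) (F : List α → M) :
    shuffleSum [x] (v ++ [y]) F =
      F (v ++ [y, x]) + shuffleSum [x] v fun w => F (w ++ [y]) := by
  induction v generalizing F with
  | nil =>
    simp only [List.nil_append, shuffleSum_cons, shuffleSum_nil_left, shuffleSum_nil_right,
      List.cons_append]
    abel
  | cons z v ih =>
    simp only [List.cons_append, shuffleSum_cons, shuffleSum_nil_left, ih]
    abel

theorem shuffleSum_splitSum (u v : List α) (F : List α → List α → M) :
    (shuffleSum u v fun w => splitSum w F) =
      splitSum u fun a b => splitSum v fun a' b' =>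
        shuffleSum a a' fun s => shuffleSum b b' fun t => F s t := by
  induction u generalizing v F with
  | nil => simp only [splitSum_nil, shuffleSum_nil_left]
  | cons x u ihu =>
    induction v generalizing F with
    | nil => simp only [splitSum_nil, shuffleSum_nil_right]
    | cons y v ihv =>
      simp only [splitSum_cons, shuffleSum_cons, shuffleSum_nil_left, shuffleSum_nil_right,
        shuffleSum_add, splitSum_add] at ihu ihv ⊢
      simp only [ihu, ihv, splitSum_cons, shuffleSum_nil_right, splitSum_add]
      abel

theorem shuffleSum_markSum (u v : List α) (F : List α → α → List α → M) :
    (shuffleSum u v fun w => markSum w F) =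
      (markSum u fun a z b => splitSum v fun a' b' =>
        shuffleSum a a' fun s => shuffleSum b b' fun t => F s z t) +
      markSum v fun a z b => splitSum u fun a' b' =>
        shuffleSum a a' fun s => shuffleSum b b' fun t => F s z t := by
  induction u generalizing v F with
  | nil =>
    simp only [markSum_nil, splitSum_nil, shuffleSum_nil_left, shuffleSum_nil_right, zero_add]
  | cons x u ihu =>
    induction v generalizing F with
    | nil => simp only [markSum_nil, splitSum_nil, shuffleSum_nil_right, add_zero]
    | cons y v ihv =>
      simp only [markSum_cons, splitSum_cons, shuffleSum_cons, shuffleSum_nil_left,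
        shuffleSum_nil_right, shuffleSum_add, splitSum_add, markSum_add] at ihu ihv ⊢
      simp only [ihu, ihv, markSum_cons, splitSum_cons, shuffleSum_nil_left,
        shuffleSum_nil_right, markSum_add, shuffleSum_comm v (x :: u)]
      abel

theorem shuffleSum_append_cons (p q v : List α) (z : α) (F : List α → M) :
    shuffleSum (p ++ z :: q) v F =
      splitSum v fun a b => shuffleSum p a fun s => shuffleSum q b fun t => F (s ++ z :: t) := by
  induction p generalizing v F with
  | nil =>
    induction v generalizing F with
    | nil => simp [splitSum_nil, shuffleSum_nil_right]
    | cons y v ih =>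
      simp only [shuffleSum_nil_left, List.nil_append] at ih ⊢
      rw [shuffleSum_cons, splitSum_cons, ih]
      rfl
  | cons x p ihp =>
    induction v generalizing F with
    | nil => simp [splitSum_nil, shuffleSum_nil_right]
    | cons y v ih =>
      simp only [List.cons_append] at ih ⊢
      rw [shuffleSum_cons, splitSum_cons, ih, ihp]
      simp only [splitSum_cons, shuffleSum_cons, shuffleSum_nil_right, splitSum_add,
        List.cons_append]
      abel

theorem shuffleSum_splitSum_of_right_alternal (u v : List α) {F : List α → List α → M}
    (h_nil : ∀ a, F a [] = 0)
    (h_alternal : ∀ a s t, s ≠ [] → t ≠ [] → shuffleSum s t (F a) = 0) :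
    (shuffleSum u v fun w => splitSum w F) =
      (splitSum u fun a b => shuffleSum a v fun s => F s b) +
        splitSum v fun a b => shuffleSum u a fun s => F s b := by
  have collapse (a : List α) {b : List α} (hb : b ≠ []) :
      (splitSum v fun a' b' => shuffleSum a a' fun s => shuffleSum b b' fun t => F s t) =
        shuffleSum a v fun s => F s b := by
    rw [splitSum_eq_of_right_ne_nil fun a' b' hb' => ?_]
    · simp only [shuffleSum_nil_right]
    · simp only [h_alternal _ b b' hb hb', shuffleSum_zero]
  rw [shuffleSum_splitSum, splitSum_eq_markSum_add_nil,
    splitSum_eq_markSum_add_nil u fun a b => shuffleSum a v fun s => F s b]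
  simp only [collapse _ (List.cons_ne_nil _ _), shuffleSum_nil_left, h_nil, shuffleSum_zero,
    add_zero]

theorem shuffleSum_splitSum_of_left_alternal (u v : List α) {F : List α → List α → M}
    (h_nil : ∀ b, F [] b = 0)
    (h_alternal : ∀ b s t, s ≠ [] → t ≠ [] → (shuffleSum s t fun a => F a b) = 0) :
    (shuffleSum u v fun w => splitSum w F) =
      (splitSum u fun a b => shuffleSum b v fun t => F a t) +
        splitSum v fun a b => shuffleSum u b fun t => F a t := by
  have collapse {a : List α} (b : List α) (ha : a ≠ []) :
      (splitSum v fun a' b' => shuffleSum a a' fun s => shuffleSum b b' fun t => F s t) =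
        shuffleSum b v fun t => F a t := by
    rw [splitSum_eq_of_left_ne_nil fun a' b' ha' => ?_]
    · simp only [shuffleSum_nil_right]
    · rw [shuffleSum_shuffleSum_comm]
      simp only [h_alternal _ a a' ha ha', shuffleSum_zero]
  rw [shuffleSum_splitSum, splitSum_eq_nil_add_markSum,
    splitSum_eq_nil_add_markSum u fun a b => shuffleSum b v fun t => F a t]
  simp only [collapse _ (List.concat_ne_nil _ _), shuffleSum_nil_left, h_nil, shuffleSum_zero,
    zero_add]
  rw [add_comm]

/-- The sum of `H a z b c` over the decompositions `w = a ++ b ++ z :: c`: the shape shared by the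
two versions of `amit`, where the block `b` acts on the letter `z` to its right. -/
def amitSum (H : List α → α → List α → List α → M) (w : List α) : M :=
  markSum w fun r z c => splitSum r fun a b => H a z b c

/-- The sum of `H a z b c` over the decompositions `w = a ++ z :: b ++ c`: the shape shared by the
two versions of `anit`, where the block `b` acts on the letter `z` to its left. -/
def anitSum (H : List α → α → List α → List α → M) (w : List α) : M :=
  markSum w fun a z r => splitSum r fun b c => H a z b c

/-- The kernels `H a z b c` that are alternal in the block `b`, and in the context `a ++ z :: c`
in the following sense: the shuffles of `p ++ z :: q` with `v` come from cutting `v` in two and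
shuffling the parts into `p` and `q`. -/
structure IsAlternalKernel (H : List α → α → List α → List α → M) : Prop where
  nil (a : List α) (z : α) (c : List α) : H a z [] c = 0
  block (a : List α) (z : α) (c : List α) {u v : List α} (hu : u ≠ []) (hv : v ≠ []) :
    (shuffleSum u v fun b => H a z b c) = 0
  context (p : List α) (z : α) (b q : List α) {v : List α} (hv : v ≠ []) :
    (splitSum v fun a' c' => shuffleSum p a' fun a => shuffleSum q c' fun c => H a z b c) = 0

namespace IsAlternalKernel

variable {H : List α → α → List α → List α → M}

theorem splitSum_shuffleSum_left (hH : IsAlternalKernel H) (p : List α) (z : α) (q : List α)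
    {v : List α} (hv : v ≠ []) :
    (splitSum v fun r' c' => shuffleSum p r' fun r => shuffleSum q c' fun c =>
        splitSum r fun a b => H a z b c) =
      splitSum v fun a' r => splitSum r fun b c' =>
        shuffleSum p a' fun a => shuffleSum q c' fun c => H a z b c := by
  have block_split (r' c : List α) :
      (shuffleSum p r' fun r => splitSum r fun a b => H a z b c) =
        (splitSum p fun p' b => shuffleSum p' r' fun a => H a z b c) +
          splitSum r' fun a' b => shuffleSum p a' fun a => H a z b c :=
    shuffleSum_splitSum_of_right_alternal p r' (fun a => hH.nil a z c)
      fun a _ _ hs ht => hH.block a z c hs ht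
  have block_from_left :
      (splitSum v fun r' c' => shuffleSum q c' fun c => splitSum p fun p' b =>
        shuffleSum p' r' fun a => H a z b c) = 0 := by
    simp only [shuffleSum_splitSum_comm, shuffleSum_shuffleSum_comm q]
    rw [splitSum_comm]
    simp only [hH.context _ z _ q hv, splitSum_zero]
  simp only [shuffleSum_shuffleSum_comm p _ q, block_split, shuffleSum_add, splitSum_add]
  rw [block_from_left, zero_add, splitSum_assoc]
  simp only [shuffleSum_splitSum_comm, shuffleSum_shuffleSum_comm q]

theorem splitSum_shuffleSum_right (hH : IsAlternalKernel H) (p : List α) (z : α) (q : List α)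
    {v : List α} (hv : v ≠ []) :
    (splitSum v fun a' r' => shuffleSum p a' fun a => shuffleSum q r' fun r =>
        splitSum r fun b c => H a z b c) =
      splitSum v fun a' r => splitSum r fun b c' =>
        shuffleSum p a' fun a => shuffleSum q c' fun c => H a z b c := by
  have block_split (a r' : List α) :
      (shuffleSum q r' fun r => splitSum r fun b c => H a z b c) =
        (splitSum q fun b q' => shuffleSum q' r' fun c => H a z b c) +
          splitSum r' fun b c' => shuffleSum q c' fun c => H a z b c :=
    shuffleSum_splitSum_of_left_alternal q r' (fun c => hH.nil a z c)
      fun c _ _ hs ht => hH.block a z c hs ht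
  have block_from_right :
      (splitSum v fun a' r' => shuffleSum p a' fun a => splitSum q fun b q' =>
        shuffleSum q' r' fun c => H a z b c) = 0 := by
    simp only [shuffleSum_splitSum_comm]
    rw [splitSum_comm]
    simp only [hH.context p z _ _ hv, splitSum_zero]
  simp only [block_split, shuffleSum_add, splitSum_add]
  rw [block_from_right, zero_add]
  simp only [shuffleSum_splitSum_comm]

/-- Both sides reduce to the terms in which the acting block and the marked letter come from
different words: by alternality of the context the other terms cancel. -/
theorem shuffleSum_amitSum_eq_anitSum (hH : IsAlternalKernel H) {u v : List α}
    (hu : u ≠ []) (hv : v ≠ []) :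
    shuffleSum u v (amitSum H) = shuffleSum u v (anitSum H) := by
  unfold amitSum anitSum
  simp only [shuffleSum_markSum, hH.splitSum_shuffleSum_left _ _ _ hu,
    hH.splitSum_shuffleSum_left _ _ _ hv, hH.splitSum_shuffleSum_right _ _ _ hu,
    hH.splitSum_shuffleSum_right _ _ _ hv]

end IsAlternalKernel

theorem splitSum_splitSum_eq_amitSum_add (w : List α) (G : List α → List α → List α → M) :
    (splitSum w fun a r => splitSum r fun b c => G a b c) =
      amitSum (fun a z b c => G a b (z :: c)) w + splitSum w fun a b => G a b [] := by
  rw [splitSum_assoc, splitSum_eq_markSum_add_nil, amitSum]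

theorem splitSum_splitSum_eq_anitSum_add (w : List α) (G : List α → List α → List α → M) :
    (splitSum w fun a r => splitSum r fun b c => G a b c) =
      anitSum (fun a z b c => G (a ++ [z]) b c) w + splitSum w fun b c => G [] b c := by
  rw [splitSum_eq_nil_add_markSum, anitSum, add_comm]

theorem sum_map_splits3_eq_amitSum {F : List α × List α × List α → M}
    {H : List α → α → List α → List α → M} (h_nil : ∀ a b, F (a, b, []) = 0)
    (h_cons : ∀ a z b c, F (a, b, z :: c) = H a z b c) (w : List α) :
    ((splits3 w).map F).sum = amitSum H w := by
  rw [sum_map_splits3, splitSum_splitSum_eq_amitSum_add]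
  simp only [h_nil, h_cons, splitSum_zero, add_zero]

theorem sum_map_splits3_eq_anitSum {F : List α × List α × List α → M}
    {H : List α → α → List α → List α → M} (h_nil : ∀ b c, F ([], b, c) = 0)
    (h_concat : ∀ a z b c, F (a ++ [z], b, c) = H a z b c) (w : List α) :
    ((splits3 w).map F).sum = anitSum H w := by
  rw [sum_map_splits3, splitSum_splitSum_eq_anitSum_add]
  simp only [h_nil, h_concat, splitSum_zero, add_zero]

/-- Both sides run over the decompositions of `w` into three blocks with nonempty middle block,
whose first letter is marked on the left and whose last letter is marked on the right. -/
theorem anitSum_eq_amitSum {F G : List α → α → List α → List α → M}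
    (h : ∀ a x b z b' c, x :: b = b' ++ [z] → F a x b c = G a z b' c) (w : List α) :
    anitSum F w = amitSum G w := by
  let T (a : List α) : List α → List α → M
    | [], _ => 0
    | x :: b, c => F a x b c
  have T_concat (a : List α) (z : α) (b' c : List α) : T a (b' ++ [z]) c = G a z b' c := by
    cases b' with
    | nil => exact h a z [] z [] c rfl
    | cons x b => exact h a x (b ++ [z]) z (x :: b) c rfl
  calc anitSum F w = splitSum w fun a r => splitSum r fun s c => T a s c := by
        rw [splitSum_eq_markSum_add_nil, splitSum_nil, anitSum]
        simp only [splitSum_cons, T, zero_add, add_zero]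
    _ = amitSum G w := by
        rw [splitSum_assoc, splitSum_eq_nil_add_markSum, splitSum_nil, amitSum]
        simp only [splitSum_concat, T_concat, T, zero_add, add_zero]

theorem amitSum_add (F G : List α → α → List α → List α → M) :
    amitSum (F + G) = amitSum F + amitSum G :=
  funext fun w => by
    simp only [amitSum, Pi.add_apply, ← markSum_add, ← splitSum_add]

theorem anitSum_add (F G : List α → α → List α → List α → M) :
    anitSum (F + G) = anitSum F + anitSum G :=
  funext fun w => by
    simp only [anitSum, Pi.add_apply, ← markSum_add, ← splitSum_add]

theorem amitSum_reverse (H : List α → α → List α → List α → M) (w : List α) :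
    amitSum H w.reverse = anitSum (fun a z b c => H c.reverse z b.reverse a.reverse) w := by
  simp only [amitSum, anitSum, markSum_reverse, splitSum_reverse]

theorem anitSum_reverse (H : List α → α → List α → List α → M) (w : List α) :
    anitSum H w.reverse = amitSum (fun a z b c => H c.reverse z b.reverse a.reverse) w := by
  simp only [amitSum, anitSum, markSum_reverse, splitSum_reverse]

theorem splitSum_mul_right {R : Type*} [NonUnitalNonAssocSemiring R] (w : List α)
    (F : List α → List α → R) (x : R) :
    (splitSum w fun a b => F a b * x) = splitSum w F * x := by
  induction w generalizing F with
  | nil => rfl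
  | cons y w ih => rw [splitSum_cons, splitSum_cons, ih, add_mul]

theorem shuffleSum_mul_right {R : Type*} [NonUnitalNonAssocSemiring R] (u v : List α)
    (F : List α → R) (x : R) :
    (shuffleSum u v fun w => F w * x) = shuffleSum u v F * x :=
  List.sum_map_mul_right ..

theorem shuffleSum_mul_left {R : Type*} [NonUnitalNonAssocSemiring R] (u v : List α)
    (F : List α → R) (x : R) :
    (shuffleSum u v fun w => x * F w) = x * shuffleSum u v F :=
  List.sum_map_mul_left ..

theorem shuffleSum_sub {N : Type*} [AddCommGroup N] (u v : List α) (F G : List α → N) :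
    (shuffleSum u v fun w => F w - G w) = shuffleSum u v F - shuffleSum u v G := by
  rw [eq_sub_iff_add_eq, ← shuffleSum_add]
  simp only [sub_add_cancel]

end WordSums

/-! ### Differences and the push -/

section Differences

variable {G M : Type*} [AddCommGroup G] [AddCommMonoid M]

/-- The successive differences of the word `p :: w`, so that `diffs 0 w.reverse` is the word at
which a u-mould is evaluated by its swap. -/
def diffs : G → List G → List G
  | _, [] => []
  | p, z :: w => (z - p) :: diffs z w

/-- The rotation `(u₁, …, uᵣ) ↦ (u₀, u₁, …, uᵣ₋₁)`, where `u₀ = -(u₁ + ⋯ + uᵣ)`, so that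
`push(A)(w) = A (pushArgs w)`. -/
def pushArgs : List G → List G
  | [] => []
  | x :: w => -(x :: w).sum :: (x :: w).dropLast

theorem diffs_append (p : G) (a b : List G) :
    diffs p (a ++ b) = diffs p a ++ diffs (a.getLastD p) b := by
  induction a generalizing p with
  | nil => rfl
  | cons z a ih => rw [List.cons_append, diffs, ih, diffs, List.getLastD_cons, List.cons_append]

theorem sum_diffs (p : G) (w : List G) : (diffs p w).sum = w.getLastD p - p := by
  induction w generalizing p with
  | nil => exact (sub_self p).symm
  | cons z w ih => rw [diffs, List.sum_cons, ih, List.getLastD_cons]; abel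

theorem length_diffs (p : G) (w : List G) : (diffs p w).length = w.length := by
  induction w generalizing p with
  | nil => rfl
  | cons z w ih => rw [diffs, List.length_cons, ih, List.length_cons]

theorem diffs_map_sub (p s : G) (w : List G) :
    diffs (p - s) (w.map fun x => x - s) = diffs p w := by
  induction w generalizing p with
  | nil => rfl
  | cons z w ih => rw [List.map_cons, diffs, ih, sub_sub_sub_cancel_right, diffs]

theorem exists_diffs_eq (p : G) (w : List G) : ∃ y, diffs p y = w := by
  induction w generalizing p with
  | nil => exact ⟨[], rfl⟩
  | cons x w ih =>
    obtain ⟨y, hy⟩ := ih (p + x)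
    exact ⟨(p + x) :: y, by rw [diffs, hy, add_sub_cancel_left]⟩

theorem map_neg_reverse_diffs_reverse (p x : G) (w : List G) :
    (diffs p (x :: w).reverse).reverse.map Neg.neg = diffs x (w ++ [p]) := by
  induction w generalizing x with
  | nil => simp [diffs]
  | cons y w ih =>
    rw [List.reverse_cons, diffs_append, List.reverse_append, List.map_append, ih,
      List.reverse_cons, List.getLastD_concat]
    simp [diffs]

theorem splitSum_diffs (p : G) (w : List G) (F : List G → List G → M) :
    splitSum (diffs p w) F =
      splitSum w fun a b => F (diffs p a) (diffs (a.getLastD p) b) := by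
  induction w generalizing p F with
  | nil => rfl
  | cons z w ih =>
    simp only [diffs, splitSum_cons, ih, List.getLastD_nil, List.getLastD_cons]

theorem markSum_diffs (p : G) (w : List G) (F : List G → G → List G → M) :
    markSum (diffs p w) F =
      markSum w fun a z b => F (diffs p a) (z - a.getLastD p) (diffs z b) := by
  induction w generalizing p F with
  | nil => rfl
  | cons z w ih =>
    simp only [diffs, markSum_cons, ih, List.getLastD_nil, List.getLastD_cons]

theorem amitSum_diffs (p : G) (w : List G) (H : List G → G → List G → List G → M) :
    amitSum H (diffs p w) = amitSum (fun a z b c =>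
      H (diffs p a) (z - b.getLastD (a.getLastD p)) (diffs (a.getLastD p) b) (diffs z c)) w := by
  simp only [amitSum, markSum_diffs, splitSum_diffs]
  congr! 4 with r z c
  exact splitSum_congr fun a b hr => by rw [← hr, getLastD_append]

theorem anitSum_diffs (p : G) (w : List G) (H : List G → G → List G → List G → M) :
    anitSum H (diffs p w) = anitSum (fun a z b c =>
      H (diffs p a) (z - a.getLastD p) (diffs z b) (diffs (b.getLastD z) c)) w := by
  simp only [anitSum, markSum_diffs, splitSum_diffs]

theorem pushArgs_concat (w : List G) (x : G) : pushArgs (w ++ [x]) = -(w.sum + x) :: w := by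
  cases w with
  | nil => simp [pushArgs]
  | cons y w =>
    rw [List.cons_append, pushArgs, ← List.cons_append, List.dropLast_concat, List.sum_append,
      List.sum_singleton]

theorem pushArgs_diffs_concat (x z : G) (w : List G) :
    pushArgs (diffs x (w ++ [z])) = diffs z (x :: w) := by
  rw [diffs_append, diffs, diffs, pushArgs_concat, sum_diffs, diffs]
  congr 1
  abel

theorem pushArgs_map_neg (w : List G) : pushArgs (w.map Neg.neg) = (pushArgs w).map Neg.neg := by
  cases w using List.reverseRecOn with
  | nil => rfl
  | append_singleton w x =>
    have sum_map_neg : (w.map Neg.neg).sum = -w.sum := (List.sum_neg w).symm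
    rw [List.map_append, List.map_singleton, pushArgs_concat, pushArgs_concat, List.map_cons,
      sum_map_neg, ← neg_add]

theorem length_pushArgs (w : List G) : (pushArgs w).length = w.length := by
  cases w <;> simp [pushArgs]

theorem length_iterate_pushArgs (n : ℕ) (w : List G) :
    (pushArgs^[n] w).length = w.length := by
  induction n generalizing w with
  | zero => rfl
  | succ n ih => rw [Function.iterate_succ_apply, ih, length_pushArgs]

theorem rotate_neg_sum_cons_pushArgs (w : List G) :
    (-(pushArgs w).sum :: pushArgs w).rotate 1 = -w.sum :: w := by
  cases w using List.reverseRecOn with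
  | nil => simp [pushArgs]
  | append_singleton w x => simp [pushArgs_concat]

theorem rotate_neg_sum_cons_iterate_pushArgs (n : ℕ) (w : List G) :
    (-(pushArgs^[n] w).sum :: pushArgs^[n] w).rotate n = -w.sum :: w := by
  induction n generalizing w with
  | zero => simp
  | succ n ih =>
    rw [Function.iterate_succ_apply, ← List.rotate_rotate, ih, rotate_neg_sum_cons_pushArgs]

theorem isPeriodicPt_pushArgs (w : List G) :
    Function.IsPeriodicPt pushArgs (w.length + 1) w := by
  have h_length : (-(pushArgs^[w.length + 1] w).sum :: pushArgs^[w.length + 1] w).length =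
      w.length + 1 := by
    rw [List.length_cons, length_iterate_pushArgs]
  have h := rotate_neg_sum_cons_iterate_pushArgs (w.length + 1) w
  nth_rw 3 [← h_length] at h
  rw [List.rotate_length] at h
  exact (List.cons.inj h).2

end Differences

theorem apply_iterate_add_nsmul {α N : Type*} [AddCommMonoid N] {T : α → α} {f c : α → N}
    (hf : ∀ x, f (T x) + c x = f x) (hc : ∀ x, c (T x) = c x) (n : ℕ) (x : α) :
    f (T^[n] x) + n • c x = f x := by
  induction n generalizing x with
  | zero => rw [Function.iterate_zero_apply, zero_nsmul, add_zero]
  | succ n ih =>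
    rw [Function.iterate_succ_apply, succ_nsmul, ← add_assoc, ← hc x, ih (T x), hc, hf]

theorem eq_zero_of_apply_add_of_isPeriodicPt {α N : Type*} [AddCommGroup N] [IsAddTorsionFree N]
    {T : α → α} {f c : α → N} (hf : ∀ x, f (T x) + c x = f x) (hc : ∀ x, c (T x) = c x) {n : ℕ}
    (hn : n ≠ 0) {x : α} (hx : Function.IsPeriodicPt T n x) : c x = 0 := by
  have h := apply_iterate_add_nsmul hf hc n x
  rwa [hx.eq, add_eq_left, nsmul_eq_zero_iff_right hn] at h

/-! ### Alternality of the brackets -/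

section Moulds

variable {𝕜 : Type*} [Field 𝕜] {A B C : List 𝕜 → 𝕜}

namespace Alternal

theorem shuffleSum_eq_zero (hA : Alternal A) {u v : List 𝕜} (hu : u ≠ []) (hv : v ≠ []) :
    shuffleSum u v A = 0 :=
  hA u v hu hv

theorem add (hA : Alternal A) (hB : Alternal B) : Alternal (A + B) := by
  intro u v hu hv
  exact (shuffleSum_add u v A B).trans <| by
    rw [hA.shuffleSum_eq_zero hu hv, hB.shuffleSum_eq_zero hu hv, add_zero]

theorem sub (hA : Alternal A) (hB : Alternal B) : Alternal (A - B) := by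
  intro u v hu hv
  exact (shuffleSum_sub u v A B).trans <| by
    rw [hA.shuffleSum_eq_zero hu hv, hB.shuffleSum_eq_zero hu hv, sub_zero]

theorem comp_map (hA : Alternal A) (f : 𝕜 → 𝕜) : Alternal (fun w => A (w.map f)) := by
  intro u v hu hv
  refine (shuffleSum_map f u v A).trans (hA.shuffleSum_eq_zero ?_ ?_) <;>
    simpa only [ne_eq, List.map_eq_nil_iff]

theorem congr (hA : Alternal A) (h : ∀ w, w ≠ [] → A w = B w) : Alternal B := by
  intro u v hu hv
  refine (shuffleSum_congr fun w hw => (h w ?_).symm).trans (hA.shuffleSum_eq_zero hu hv)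
  rintro rfl
  exact hu (List.append_eq_nil_iff.mp hw.nil_eq.symm).1

end Alternal

theorem mu_eq_splitSum (A B : List 𝕜 → 𝕜) (w : List 𝕜) :
    mu A B w = splitSum w fun a b => A a * B b := by
  rw [← sum_map_splits2 w fun p => A p.1 * B p.2, splits2, List.map_map]
  rfl

theorem Alternal.shuffleSum_mu (hA : Alternal A) (hB : Alternal B) (hB₀ : B [] = 0)
    {u v : List 𝕜} (hu : u ≠ []) (hv : v ≠ []) :
    shuffleSum u v (mu A B) = A u * B v + A v * B u := by
  have left_alternal (u : List 𝕜) {v : List 𝕜} (hv : v ≠ []) :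
      (splitSum u fun a b => shuffleSum a v fun s => A s * B b) = A v * B u := by
    simp only [shuffleSum_mul_right]
    rw [splitSum_eq_of_left_ne_nil fun a b ha => ?_, shuffleSum_nil_left]
    rw [hA.shuffleSum_eq_zero ha hv, zero_mul]
  have right_alternal :
      (shuffleSum u v fun w => splitSum w fun a b => A a * B b) =
        (splitSum u fun a b => shuffleSum a v fun s => A s * B b) +
          splitSum v fun a b => shuffleSum u a fun s => A s * B b :=
    shuffleSum_splitSum_of_right_alternal u v (fun a => by rw [hB₀, mul_zero])
      fun a s t hs ht => by
        rw [shuffleSum_mul_left, hB.shuffleSum_eq_zero hs ht, mul_zero]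
  calc shuffleSum u v (mu A B) = shuffleSum u v fun w => splitSum w fun a b => A a * B b := by
        rw [funext (mu_eq_splitSum A B)]
    _ = A v * B u + A u * B v := by
        simp only [right_alternal, shuffleSum_comm u, left_alternal _ hu, left_alternal _ hv]
    _ = A u * B v + A v * B u := add_comm _ _

theorem Alternal.lu (hA : Alternal A) (hB : Alternal B) (hA₀ : A [] = 0) (hB₀ : B [] = 0) :
    Alternal (lu A B) := by
  intro u v hu hv
  refine (shuffleSum_sub u v (mu A B) (mu B A)).trans ?_
  rw [hA.shuffleSum_mu hB hB₀ hu hv, hB.shuffleSum_mu hA hA₀ hu hv]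
  ring

theorem Alternal.isAlternalKernel (hA : Alternal A) {φ : 𝕜 → List 𝕜 → 𝕜}
    (hφ : ∀ z {b b' : List 𝕜}, b.Perm b' → φ z b = φ z b') {β : 𝕜 → List 𝕜 → 𝕜}
    (hβ₀ : ∀ z, β z [] = 0) (hβ : ∀ z, Alternal (β z)) :
    IsAlternalKernel fun a z b c => A (a ++ φ z b :: c) * β z b where
  nil a z c := by rw [hβ₀, mul_zero]
  block a z c u v hu hv := by
    have : (shuffleSum u v fun b => A (a ++ φ z b :: c) * β z b) =
        shuffleSum u v fun b => A (a ++ φ z (u ++ v) :: c) * β z b :=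
      shuffleSum_congr fun b hb => by rw [hφ z hb]
    rw [this, shuffleSum_mul_left, (hβ z).shuffleSum_eq_zero hu hv, mul_zero]
  context p z b q v hv := by
    simp only [shuffleSum_mul_right, splitSum_mul_right]
    rw [← shuffleSum_append_cons, hA.shuffleSum_eq_zero (by simp) hv, zero_mul]

/-- The summand of `amit(B)·A` and `anit(B)·A` on u-moulds: in both flexions the marked letter
absorbs the sum of the block. -/
def kernelU (B A : List 𝕜 → 𝕜) (a : List 𝕜) (z : 𝕜) (b c : List 𝕜) : 𝕜 :=
  A (a ++ (z + b.sum) :: c) * B b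

/-- The summand of `amit(B)·A` and `anit(B)·A` on v-moulds: in both flexions the marked letter
is subtracted from the block. -/
def kernelV (B A : List 𝕜 → 𝕜) (a : List 𝕜) (z : 𝕜) (b c : List 𝕜) : 𝕜 :=
  A (a ++ z :: c) * B (b.map fun x => x - z)

theorem Alternal.isAlternalKernel_kernelU (hA : Alternal A) (hB : Alternal B) (hB₀ : B [] = 0) :
    IsAlternalKernel (kernelU B A) :=
  hA.isAlternalKernel (φ := fun z b => z + b.sum) (fun z _ _ h => by rw [h.sum_eq])
    (fun _ => hB₀) fun _ => hB

theorem Alternal.isAlternalKernel_kernelV (hA : Alternal A) (hB : Alternal B) (hB₀ : B [] = 0) :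
    IsAlternalKernel (kernelV B A) :=
  hA.isAlternalKernel (φ := fun z _ => z) (fun _ _ _ _ => rfl) (fun _ => hB₀) fun z =>
    hB.comp_map fun x => x - z

theorem addLast_concat (s : 𝕜) (a : List 𝕜) (z : 𝕜) : addLast s (a ++ [z]) = a ++ [z + s] := by
  induction a with
  | nil => rfl
  | cons x a ih => cases a <;> simp_all [addLast]

theorem amitU_eq_amitSum (hB₀ : B [] = 0) (A : List 𝕜 → 𝕜) :
    amitU B A = amitSum (kernelU B A) := by
  refine funext fun w => sum_map_splits3_eq_amitSum (fun a b => ?_) (fun a z b c => ?_) w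
  · cases b <;> rfl
  · cases b <;> simp [kernelU, addFirst, hB₀]

theorem anitU_eq_anitSum (hB₀ : B [] = 0) (A : List 𝕜 → 𝕜) :
    anitU B A = anitSum (kernelU B A) := by
  refine funext fun w => sum_map_splits3_eq_anitSum (fun b c => rfl) (fun a z b c => ?_) w
  cases b with
  | nil => cases a <;> simp [kernelU, hB₀]
  | cons y b =>
    cases a with
    | nil => simp [kernelU, addLast]
    | cons x a =>
      change A (addLast (y :: b).sum (x :: a ++ [z]) ++ c) * B (y :: b) = _
      rw [addLast_concat, List.append_assoc, kernelU, List.singleton_append]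

theorem amitV_eq_amitSum (hB₀ : B [] = 0) (A : List 𝕜 → 𝕜) :
    amitV B A = amitSum (kernelV B A) := by
  refine funext fun w => sum_map_splits3_eq_amitSum (fun a b => ?_) (fun a z b c => ?_) w
  · cases b <;> rfl
  · cases b <;> simp [kernelV, hB₀]

theorem anitV_eq_anitSum (hB₀ : B [] = 0) (A : List 𝕜 → 𝕜) :
    anitV B A = anitSum (kernelV B A) := by
  refine funext fun w => sum_map_splits3_eq_anitSum (fun b c => rfl) (fun a z b c => ?_) w
  cases b with
  | nil => cases a <;> simp [kernelV, hB₀]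
  | cons y b =>
    cases a with
    | nil => simp [kernelV]
    | cons x a =>
      change A (x :: a ++ [z] ++ c) * B ((y :: b).map fun t => t - (x :: a ++ [z]).getLastD 0) = _
      rw [List.getLastD_concat, List.append_assoc, kernelV, List.singleton_append]

theorem IsAlternalKernel.alternal_amitSum_sub_anitSum
    {H : List 𝕜 → 𝕜 → List 𝕜 → List 𝕜 → 𝕜} (hH : IsAlternalKernel H) :
    Alternal (amitSum H - anitSum H) := fun u v hu hv =>
  (shuffleSum_sub u v (amitSum H) (anitSum H)).trans <|
    sub_eq_zero.mpr (hH.shuffleSum_amitSum_eq_anitSum hu hv)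

theorem aritU_eq (hB₀ : B [] = 0) (A : List 𝕜 → 𝕜) :
    aritU B A = amitSum (kernelU B A) - anitSum (kernelU B A) := by
  rw [← amitU_eq_amitSum hB₀, ← anitU_eq_anitSum hB₀]
  rfl

theorem aritV_eq (hB₀ : B [] = 0) (A : List 𝕜 → 𝕜) :
    aritV B A = amitSum (kernelV B A) - anitSum (kernelV B A) := by
  rw [← amitV_eq_amitSum hB₀, ← anitV_eq_anitSum hB₀]
  rfl

theorem Alternal.aritU (hA : Alternal A) (hB : Alternal B) (hB₀ : B [] = 0) :
    Alternal (aritU B A) := by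
  rw [aritU_eq hB₀]
  exact (hA.isAlternalKernel_kernelU hB hB₀).alternal_amitSum_sub_anitSum

theorem Alternal.aritV (hA : Alternal A) (hB : Alternal B) (hB₀ : B [] = 0) :
    Alternal (aritV B A) := by
  rw [aritV_eq hB₀]
  exact (hA.isAlternalKernel_kernelV hB hB₀).alternal_amitSum_sub_anitSum

theorem Alternal.ariU (hA : Alternal A) (hB : Alternal B) (hA₀ : A [] = 0) (hB₀ : B [] = 0) :
    Alternal (ariU A B) :=
  ((hA.aritU hB hB₀).add (hA.lu hB hA₀ hB₀)).sub (hB.aritU hA hA₀)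

theorem Alternal.ariV (hA : Alternal A) (hB : Alternal B) (hA₀ : A [] = 0) (hB₀ : B [] = 0) :
    Alternal (ariV A B) :=
  ((hA.aritV hB hB₀).add (hA.lu hB hA₀ hB₀)).sub (hB.aritV hA hA₀)

theorem aritU_add_left (hB₀ : B [] = 0) (hC₀ : C [] = 0) (A : List 𝕜 → 𝕜) :
    aritU (B + C) A = aritU B A + aritU C A := by
  have kernel_add : kernelU (B + C) A = kernelU B A + kernelU C A := by
    funext a z b c
    exact mul_add _ _ _
  rw [aritU_eq hB₀, aritU_eq hC₀, aritU_eq (by simp [hB₀, hC₀]), kernel_add, amitSum_add,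
    anitSum_add, add_sub_add_comm]

theorem aritU_add_right (hA₀ : A [] = 0) (B C : List 𝕜 → 𝕜) :
    aritU A (B + C) = aritU A B + aritU A C := by
  have kernel_add : kernelU A (B + C) = kernelU A B + kernelU A C := by
    funext a z b c
    exact add_mul _ _ _
  rw [aritU_eq hA₀, aritU_eq hA₀, aritU_eq hA₀, kernel_add, amitSum_add, anitSum_add,
    add_sub_add_comm]

theorem lu_add_right (A B C : List 𝕜 → 𝕜) : lu A (B + C) = lu A B + lu A C := by
  funext w
  simp only [lu, mu, Pi.add_apply, mul_add, add_mul, Finset.sum_add_distrib]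
  ring

theorem ariU_add_right (hA₀ : A [] = 0) (hB₀ : B [] = 0) (hC₀ : C [] = 0) :
    ariU A (B + C) = ariU A B + ariU A C := by
  change aritU (B + C) A + lu A (B + C) - aritU A (B + C) =
    (aritU B A + lu A B - aritU A B) + (aritU C A + lu A C - aritU A C)
  rw [aritU_add_left hB₀ hC₀, aritU_add_right hA₀, lu_add_right]
  abel

theorem ariU_skew (A B : List 𝕜 → 𝕜) : -ariU A B = ariU B A := by
  funext w
  simp only [ariU, lu, Pi.neg_apply]
  ring

theorem ariU_nil (hA₀ : A [] = 0) (hB₀ : B [] = 0) : ariU A B [] = 0 := by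
  simp [ariU, lu, mu_eq_splitSum, splitSum_nil, aritU_eq hA₀, aritU_eq hB₀, amitSum, anitSum,
    markSum_nil, hA₀]

theorem ariU_singleton (hA₀ : A [] = 0) (hB₀ : B [] = 0) (x : 𝕜) : ariU A B [x] = 0 := by
  simp [ariU, lu, mu_eq_splitSum, splitSum_cons, splitSum_nil, aritU_eq hA₀, aritU_eq hB₀,
    amitSum, anitSum, markSum_cons, markSum_nil, kernelU, hA₀, hB₀]

/-! ### Constant-valued moulds -/

namespace IsConstantMould

theorem aritU_left (hC : IsConstantMould C) (hC₀ : C [] = 0) (A : List 𝕜 → 𝕜) :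
    aritU C A = 0 := by
  rw [aritU_eq hC₀, sub_eq_zero]
  refine (funext <| anitSum_eq_amitSum fun a x b z b' c h => ?_).symm
  have h_sum : x + b.sum = z + b'.sum := by
    simpa [add_comm] using congrArg List.sum h
  have h_length : b.length = b'.length := by
    simpa using congrArg List.length h
  rw [kernelU, kernelU, h_sum, hC b b' h_length]

theorem aritU_right (hC : IsConstantMould C) (hA₀ : A [] = 0) : aritU A C = lu A C := by
  funext w
  let G (a b c : List 𝕜) : 𝕜 := C (a ++ c) * A b
  have amit_kernel : kernelU A C = fun a z b c => G a b (z :: c) := by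
    funext a z b c
    exact congrArg (· * A b) (hC _ _ (by simp))
  have anit_kernel : kernelU A C = fun a z b c => G (a ++ [z]) b c := by
    funext a z b c
    exact congrArg (· * A b) (hC _ _ (by simp))
  have amit_eq := splitSum_splitSum_eq_amitSum_add w G
  have anit_eq := splitSum_splitSum_eq_anitSum_add w G
  rw [← amit_kernel] at amit_eq
  rw [← anit_kernel, amit_eq] at anit_eq
  rw [aritU_eq hA₀, Pi.sub_apply, lu, sub_eq_sub_iff_add_eq_add, mu_eq_splitSum, mu_eq_splitSum]
  simpa only [G, List.append_nil, List.nil_append, mul_comm, add_comm] using anit_eq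

theorem ariU_right (hC : IsConstantMould C) (hC₀ : C [] = 0) (hA₀ : A [] = 0) :
    ariU A C = 0 := by
  change aritU C A + lu A C - aritU A C = 0
  rw [hC.aritU_left hC₀, hC.aritU_right hA₀, zero_add, sub_self]

theorem ariU_add_right (hC : IsConstantMould C) (hC₀ : C [] = 0) (hA₀ : A [] = 0)
    (hB₀ : B [] = 0) : ariU A (B + C) = ariU A B := by
  rw [_root_.ariU_add_right hA₀ hB₀ hC₀, hC.ariU_right hC₀ hA₀, add_zero]

theorem ariU_add_left (hC : IsConstantMould C) (hC₀ : C [] = 0) (hA₀ : A [] = 0)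
    (hB₀ : B [] = 0) : ariU (A + C) B = ariU A B := by
  rw [← ariU_skew, hC.ariU_add_right hC₀ hB₀ hA₀, ariU_skew]

theorem swapUV_eq (hC : IsConstantMould C) : swapUV C = C :=
  funext fun w => hC _ w (by simp [swapUargs])

end IsConstantMould

/-! ### The swap and the two brackets -/

theorem pushM_apply (A : List 𝕜 → 𝕜) (w : List 𝕜) : pushM A w = A (pushArgs w) := by
  cases w <;> rfl

theorem apply_diffs_eq_of_pushM_eq (hA : pushM A = A) {x z : 𝕜} {b b' : List 𝕜}
    (h : x :: b = b' ++ [z]) : A (diffs x b) = A (diffs z b') := by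
  cases b' with
  | nil =>
    obtain ⟨rfl, rfl⟩ := List.cons.inj h
    rfl
  | cons y s =>
    obtain ⟨rfl, rfl⟩ := List.cons.inj h
    calc A (diffs x (s ++ [z])) = pushM A (diffs x (s ++ [z])) := by rw [hA]
      _ = A (diffs z (x :: s)) := by rw [pushM_apply, pushArgs_diffs_concat]

theorem swapUargs_eq_diffs (w : List 𝕜) : swapUargs w = diffs 0 w.reverse := by
  have zipWith_eq_diffs (p : 𝕜) (v : List 𝕜) : List.zipWith (· - ·) v (p :: v) = diffs p v := by
    induction v generalizing p with
    | nil => rfl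
    | cons z v ih => rw [List.zipWith_cons_cons, ih, diffs]
  exact zipWith_eq_diffs 0 w.reverse

theorem swapUV_reverse (A : List 𝕜 → 𝕜) (w : List 𝕜) : swapUV A w.reverse = A (diffs 0 w) := by
  rw [swapUV, swapUargs_eq_diffs, List.reverse_reverse]

/-- The summand of `amit(swap B)·swap A` and `anit(swap B)·swap A`, read on the reversed word and
written in terms of `A` and `B`. -/
def swapKernel (B A : List 𝕜 → 𝕜) (a : List 𝕜) (z : 𝕜) (b c : List 𝕜) : 𝕜 :=
  A (diffs 0 (a ++ z :: c)) * B (diffs z b)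

theorem kernelV_swapUV_reverse (B A : List 𝕜 → 𝕜) (a : List 𝕜) (z : 𝕜) (b c : List 𝕜) :
    kernelV (swapUV B) (swapUV A) c.reverse z b.reverse a.reverse = swapKernel B A a z b c := by
  have reverse_context : c.reverse ++ z :: a.reverse = (a ++ z :: c).reverse := by simp
  rw [kernelV, reverse_context, List.map_reverse, swapUV_reverse, swapUV_reverse, swapKernel,
    ← sub_self z, diffs_map_sub]

theorem amitV_swapUV_reverse (hB₀ : B [] = 0) (A : List 𝕜 → 𝕜) (w : List 𝕜) :
    amitV (swapUV B) (swapUV A) w.reverse = anitSum (swapKernel B A) w := by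
  rw [amitV_eq_amitSum (by exact hB₀), amitSum_reverse]
  simp only [kernelV_swapUV_reverse]

theorem anitV_swapUV_reverse (hB₀ : B [] = 0) (A : List 𝕜 → 𝕜) (w : List 𝕜) :
    anitV (swapUV B) (swapUV A) w.reverse = amitSum (swapKernel B A) w := by
  rw [anitV_eq_anitSum (by exact hB₀), anitSum_reverse]
  simp only [kernelV_swapUV_reverse]

theorem amitU_diffs (hB₀ : B [] = 0) (A : List 𝕜 → 𝕜) (w : List 𝕜) :
    amitU B A (diffs 0 w) = amitSum (fun a z b c =>
      A (diffs 0 (a ++ z :: c)) * B (diffs (a.getLastD 0) b)) w := by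
  rw [amitU_eq_amitSum hB₀, amitSum_diffs]
  simp only [kernelU, sum_diffs, sub_add_sub_cancel, diffs_append, diffs]

theorem anitU_diffs (hB₀ : B [] = 0) (A : List 𝕜 → 𝕜) (w : List 𝕜) :
    anitU B A (diffs 0 w) = anitSum (fun a z b c =>
      A (diffs 0 (a ++ b.getLastD z :: c)) * B (diffs z b)) w := by
  rw [anitU_eq_anitSum hB₀, anitSum_diffs]
  simp only [kernelU, sum_diffs, sub_add_sub_cancel', diffs_append, diffs]

theorem mu_diffs (A B : List 𝕜 → 𝕜) (w : List 𝕜) :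
    mu A B (diffs 0 w) = splitSum w fun a b => A (diffs 0 a) * B (diffs (a.getLastD 0) b) := by
  rw [mu_eq_splitSum, splitSum_diffs]

theorem mu_swapUV_reverse (A B : List 𝕜 → 𝕜) (w : List 𝕜) :
    mu (swapUV A) (swapUV B) w.reverse =
      splitSum w fun a b => A (diffs 0 b) * B (diffs 0 a) := by
  simp only [mu_eq_splitSum, splitSum_reverse, swapUV_reverse]

theorem amitU_diffs_add_mu (hB₀ : B [] = 0) (A : List 𝕜 → 𝕜) (w : List 𝕜) :
    amitU B A (diffs 0 w) + mu A B (diffs 0 w) =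
      amitV (swapUV B) (swapUV A) w.reverse + mu (swapUV A) (swapUV B) w.reverse := by
  let G (a b c : List 𝕜) : 𝕜 := A (diffs 0 (a ++ c)) * B (diffs (a.getLastD 0) b)
  have h := (splitSum_splitSum_eq_amitSum_add w G).symm.trans
    (splitSum_splitSum_eq_anitSum_add w G)
  simp only [G, List.append_nil, List.nil_append, List.getLastD_nil, List.getLastD_concat,
    List.append_assoc, List.singleton_append] at h
  rw [amitU_diffs hB₀, mu_diffs, amitV_swapUV_reverse hB₀, mu_swapUV_reverse]
  exact h

theorem anitU_diffs_eq_anitV (hB : pushM B = B) (hB₀ : B [] = 0) (A : List 𝕜 → 𝕜) (w : List 𝕜) :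
    anitU B A (diffs 0 w) = anitV (swapUV B) (swapUV A) w.reverse := by
  rw [anitU_diffs hB₀, anitV_swapUV_reverse hB₀]
  refine anitSum_eq_amitSum (fun a x b z b' c h => ?_) w
  have h_last : b.getLastD x = z := by
    rw [← List.getLastD_cons (a := 0), h, List.getLastD_concat]
  rw [swapKernel, h_last, apply_diffs_eq_of_pushM_eq hB h]

theorem swapUV_ariU (hA : pushM A = A) (hB : pushM B = B) (hA₀ : A [] = 0) (hB₀ : B [] = 0) :
    swapUV (ariU A B) = ariV (swapUV A) (swapUV B) := by
  funext w
  rw [← w.reverse_reverse, swapUV_reverse]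
  simp only [ariU, aritU, lu, ariV, aritV, anitU_diffs_eq_anitV hA hA₀,
    anitU_diffs_eq_anitV hB hB₀]
  linear_combination amitU_diffs_add_mu hB₀ A w.reverse - amitU_diffs_add_mu hA₀ B w.reverse

/-! ### Push-invariance -/

namespace Alternal

theorem shuffleSum_cons_right_eq (hA : Alternal A) (x : 𝕜) (p q : List 𝕜) :
    (shuffleSum p q fun w => A (x :: w)) = (-1) ^ q.length * A (q.reverse ++ x :: p) := by
  induction q generalizing x p with
  | nil => simp [shuffleSum_nil_right]
  | cons y q ih =>
    have h := hA.shuffleSum_eq_zero (List.cons_ne_nil x p) (List.cons_ne_nil y q)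
    rw [shuffleSum_cons, ih, add_eq_zero_iff_eq_neg] at h
    rw [h, List.length_cons, List.reverse_cons, List.append_assoc, List.singleton_append, pow_succ]
    ring

theorem mantarM_eq (hA : Alternal A) (hA₀ : A [] = 0) : mantarM A = A := by
  funext w
  cases w with
  | nil => simp [mantarM, hA₀]
  | cons x w =>
    have h := hA.shuffleSum_cons_right_eq x [] w
    rw [shuffleSum_nil_left] at h
    rw [mantarM, h, List.reverse_cons, List.length_cons, pow_succ, pow_succ]
    ring

end Alternal

theorem pushArgs_map_neg_reverse_diffs (w : List 𝕜) :
    pushArgs ((diffs 0 w.reverse).reverse.map Neg.neg) = diffs 0 w := by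
  cases w with
  | nil => rfl
  | cons x w => rw [map_neg_reverse_diffs_reverse, pushArgs_diffs_concat]

theorem isPeriodicPt_pushArgs_map_neg (w : List 𝕜) :
    Function.IsPeriodicPt (fun w : List 𝕜 => pushArgs (w.map Neg.neg)) (2 * (w.length + 1)) w := by
  have neg_involutive : Function.Involutive (List.map (Neg.neg : 𝕜 → 𝕜)) := fun w => by simp
  have commute : Function.Commute pushArgs (List.map (Neg.neg : 𝕜 → 𝕜)) := pushArgs_map_neg
  change (pushArgs ∘ List.map Neg.neg)^[2 * (w.length + 1)] w = w
  rw [commute.comp_iterate, Function.comp_apply,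
    neg_involutive.iterate_even (even_two_mul _)]
  exact (isPeriodicPt_pushArgs w).const_mul 2

theorem swapUV_add_isConstantMould (A : List 𝕜 → 𝕜) (hC : IsConstantMould C) :
    swapUV (A + C) = swapUV A + C := by
  change swapUV A + swapUV C = swapUV A + C
  rw [hC.swapUV_eq]

namespace Alternal

theorem apply_pushArgs_map_neg_add (hA : Alternal A) (hA₀ : A [] = 0) (hC : IsConstantMould C)
    (hC₀ : C [] = 0) (hswap : Alternal (swapUV (A + C))) (w : List 𝕜) :
    A (pushArgs (w.map Neg.neg)) + (1 - (-1) ^ (w.length + 1)) * C w = A w := by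
  obtain ⟨y, hy⟩ := exists_diffs_eq 0 w.reverse
  have hy_length : y.length = w.length := by
    rw [← length_diffs 0 y, hy, List.length_reverse]
  have hy_push : swapUV (A + C) y = (A + C) (pushArgs (w.map Neg.neg)) := by
    have h := pushArgs_map_neg_reverse_diffs y.reverse
    rw [List.reverse_reverse, hy, List.reverse_reverse] at h
    rw [h, swapUV, swapUargs_eq_diffs]
  have mantar_swap : (-1) ^ (w.length + 1) * (A w.reverse + C w) =
      A (pushArgs (w.map Neg.neg)) + C w := by
    have h := congrFun (hswap.mantarM_eq (by simp [swapUV, swapUargs, hA₀, hC₀])) y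
    rw [mantarM, hy_push, swapUV_reverse, hy, hy_length, Pi.add_apply, Pi.add_apply,
      hC _ w (by simp), hC (pushArgs _) w (by simp [length_pushArgs])] at h
    exact h
  have mantar_self : (-1) ^ (w.length + 1) * A w.reverse = A w :=
    congrFun (hA.mantarM_eq hA₀) w
  linear_combination mantar_self - mantar_swap

end Alternal

theorem Alternal.apply_pushArgs_map_neg [CharZero 𝕜] (hA : Alternal A) (hA₀ : A [] = 0)
    (hC : IsConstantMould C) (hC₀ : C [] = 0) (hswap : Alternal (swapUV (A + C))) (w : List 𝕜) :
    A (pushArgs (w.map Neg.neg)) = A w := by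
  have step := hA.apply_pushArgs_map_neg_add hA₀ hC hC₀ hswap
  have const_eq_zero : (1 - (-1) ^ (w.length + 1)) * C w = 0 :=
    eq_zero_of_apply_add_of_isPeriodicPt (f := A)
      (c := fun w => (1 - (-1) ^ (w.length + 1)) * C w) step
      (fun w => by
        have h_length : (pushArgs (w.map Neg.neg)).length = w.length := by
          rw [length_pushArgs, List.length_map]
        simp only [h_length, hC _ w h_length])
      (by simp) (isPeriodicPt_pushArgs_map_neg w)
  rw [← step w, const_eq_zero, add_zero]

/-- Write `w = x₁ x₂ t` and let `x₀ = -(x₁ + x₂ + ∑ t)`. The push exchanges, up to the sign, the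
shuffles of `x₁` with `x₂ t` which begin with `x₂` and the shuffles of `x₁` with `t x₀` which end
with `x₀`; each of the two families leaves one term, `w` and `t x₀ x₁`, a double push apart. -/
theorem Alternal.eq_zero_of_apply_pushArgs_eq_neg [CharZero 𝕜] (hB : Alternal B)
    (hpush : ∀ w, B (pushArgs w) = -B w) (x₁ x₂ : 𝕜) (t : List 𝕜) : B (x₁ :: x₂ :: t) = 0 := by
  let x₀ := -(x₁ + x₂ + t.sum)
  have sum_begin : B (x₁ :: x₂ :: t) + (shuffleSum [x₁] t fun w => B (x₂ :: w)) = 0 := by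
    rw [← hB.shuffleSum_eq_zero (List.cons_ne_nil x₁ []) (List.cons_ne_nil x₂ t),
      shuffleSum_cons, shuffleSum_nil_left]
  have sum_end : B (t ++ [x₀, x₁]) + (shuffleSum [x₁] t fun w => B (w ++ [x₀])) = 0 := by
    rw [← hB.shuffleSum_eq_zero (List.cons_ne_nil x₁ []) (List.concat_ne_nil x₀ t),
      shuffleSum_singleton_concat]
  have push_shuffles : (shuffleSum [x₁] t fun w => B (x₂ :: w)) +
      (shuffleSum [x₁] t fun w => B (w ++ [x₀])) = 0 := by
    rw [← shuffleSum_add, ← shuffleSum_zero [x₁] t]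
    refine shuffleSum_congr fun w hw => ?_
    have h_first : -(w.sum + x₀) = x₂ := by
      rw [hw.sum_eq, List.singleton_append, List.sum_cons]
      ring
    rw [← h_first, ← pushArgs_concat, hpush, neg_add_cancel]
  have push_push : B (x₁ :: x₂ :: t) = B (t ++ [x₀, x₁]) := by
    have h : pushArgs (pushArgs (t ++ [x₀] ++ [x₁])) = x₁ :: x₂ :: t := by
      rw [pushArgs_concat, ← List.cons_append, pushArgs_concat, List.sum_append, List.sum_cons,
        List.sum_singleton]
      congr 2 <;> ring
    rw [← h, hpush, hpush, neg_neg, List.append_assoc, List.singleton_append]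
  linear_combination (sum_begin + sum_end - push_shuffles + push_push) / 2

theorem apply_pushArgs_eq_negM (hpush : ∀ w, A (pushArgs (w.map Neg.neg)) = A w) (w : List 𝕜) :
    A (pushArgs w) = negM A w := by
  calc A (pushArgs w) = A (pushArgs ((w.map Neg.neg).map Neg.neg)) := by
        rw [List.map_map, neg_comp_neg, List.map_id]
    _ = negM A w := hpush (w.map Neg.neg)

theorem Alternal.negM_eq [CharZero 𝕜] (hA : Alternal A) (hA_even : ∀ x, A [-x] = A [x])
    (hpush : ∀ w, A (pushArgs (w.map Neg.neg)) = A w) : negM A = A := by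
  have odd_part_push (w : List 𝕜) : (A - negM A) (pushArgs w) = -(A - negM A) w := by
    have negM_push : negM A (pushArgs w) = A w := by
      rw [← hpush w, pushArgs_map_neg]
      rfl
    rw [Pi.sub_apply, Pi.sub_apply, negM_push, apply_pushArgs_eq_negM hpush, neg_sub]
  funext w
  match w with
  | [] => rfl
  | [x] => exact hA_even x
  | x₁ :: x₂ :: t =>
    exact (sub_eq_zero.mp <| (hA.sub (hA.comp_map Neg.neg)).eq_zero_of_apply_pushArgs_eq_neg
      odd_part_push x₁ x₂ t).symm

theorem Alternal.pushM_eq [CharZero 𝕜] (hA : Alternal A) (hA_even : ∀ x, A [-x] = A [x])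
    (hpush : ∀ w, A (pushArgs (w.map Neg.neg)) = A w) : pushM A = A := by
  funext w
  rw [pushM_apply, apply_pushArgs_eq_negM hpush, hA.negM_eq hA_even hpush]

theorem IsConstantMould.pushM_add (hC : IsConstantMould C) (hA : pushM A = A) :
    pushM (A + C) = A + C := by
  funext w
  rw [pushM_apply, Pi.add_apply, Pi.add_apply, ← pushM_apply A, hA, hC _ w (length_pushArgs w)]

theorem InALstarAL.exists_alternal_swapUV_add (hA : InALstarAL A) :
    ∃ C, IsConstantMould C ∧ C [] = 0 ∧ Alternal (swapUV (A + C)) := by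
  obtain ⟨-, -, ⟨C, hC, hswap⟩, -⟩ := hA
  have hC' : IsConstantMould fun w => if w = [] then 0 else C w := by
    intro w w' h
    have h_nil : w = [] ↔ w' = [] := by
      rw [← List.length_eq_zero_iff, h, List.length_eq_zero_iff]
    simp only [h_nil, hC w w' h]
  refine ⟨_, hC', if_pos rfl, ?_⟩
  rw [swapUV_add_isConstantMould A hC']
  exact hswap.congr fun w hw => by simp [hw]

theorem InALstarAL.pushM_eq [CharZero 𝕜] (hA : InALstarAL A) : pushM A = A := by
  obtain ⟨C, hC, hC₀, hswap⟩ := hA.exists_alternal_swapUV_add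
  obtain ⟨hA₀, hA_alt, -, hA_even⟩ := hA
  exact hA_alt.pushM_eq hA_even (hA_alt.apply_pushArgs_map_neg hA₀ hC hC₀ hswap)

theorem InALstarAL.alternal_swapUV_ariU [CharZero 𝕜] (hA : InALstarAL A) (hB : InALstarAL B) :
    Alternal (swapUV (ariU A B)) := by
  obtain ⟨C, hC, hC₀, hAC⟩ := hA.exists_alternal_swapUV_add
  obtain ⟨E, hE, hE₀, hBE⟩ := hB.exists_alternal_swapUV_add
  have hA₀ : A [] = 0 := hA.1
  have hB₀ : B [] = 0 := hB.1
  have hAC₀ : (A + C) [] = 0 := by rw [Pi.add_apply, hA₀, hC₀, add_zero]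
  have hBE₀ : (B + E) [] = 0 := by rw [Pi.add_apply, hB₀, hE₀, add_zero]
  rw [← hC.ariU_add_left hC₀ hA₀ hB₀, ← hE.ariU_add_right hE₀ hAC₀ hB₀,
    swapUV_ariU (hC.pushM_add hA.pushM_eq) (hE.pushM_add hB.pushM_eq) hAC₀ hBE₀]
  exact hAC.ariV hBE hAC₀ hBE₀

theorem InALstarAL.inALAL_ariU [CharZero 𝕜] (hA : InALstarAL A) (hB : InALstarAL B) :
    InALAL (ariU A B) := by
  have h_swap := hA.alternal_swapUV_ariU hB
  obtain ⟨hA₀, hA_alt, -, -⟩ := hA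
  obtain ⟨hB₀, hB_alt, -, -⟩ := hB
  exact ⟨ariU_nil hA₀ hB₀, hA_alt.ariU hB_alt hA₀ hB₀, h_swap, fun x => by
    rw [ariU_singleton hA₀ hB₀, ariU_singleton hA₀ hB₀]⟩

theorem InALAL.inALstarAL (hA : InALAL A) : InALstarAL A := by
  obtain ⟨hA₀, hA_alt, hA_swap, hA_even⟩ := hA
  exact ⟨hA₀, hA_alt, ⟨0, fun _ _ _ => rfl, by simpa using hA_swap⟩, hA_even⟩

end Moulds

/-- ARI_{al/al} and ARI_{al*al} are Lie subalgebras under the ari-bracket,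
and the bracket of two elements of ARI_{al*al} lies in ARI_{al/al}. -/
theorem alal_and_alstaral_closed_under_ari :
    (∀ A B : List K → K, InALAL A → InALAL B → InALAL (ariU A B)) ∧
    (∀ A B : List K → K, InALstarAL A → InALstarAL B → InALstarAL (ariU A B)) ∧
    (∀ A B : List K → K, InALstarAL A → InALstarAL B → InALAL (ariU A B)) := by
  have closed {A B : List K → K} (hA : InALstarAL A) (hB : InALstarAL B) : InALAL (ariU A B) :=
    hA.inALAL_ariU hB
  exact ⟨fun _ _ hA hB => closed hA.inALstarAL hB.inALstarAL,
    fun _ _ hA hB => (closed hA hB).inALstarAL, fun _ _ hA hB => closed hA hB⟩
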